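/- The infinite binary sequence S = S_1 S_2 S_3 ··· is normal: for every nonempty binary string w, the limit as n → ∞ of occ(w, S↾n)/n equals 2^{−|w|}. -/

import Mathlib

/-- `occ w x`: the number of indices `i` with `x[i..i+|w|-1] = w`,
i.e. the number of occurrences of `w` as a substring of `x`. -/
def occ (w x : List Bool) : ℕ :=
  ((List.range (x.length + 1 - w.length)).filter
    (fun i => decide ((x.drop i).take w.length = w))).length

/-- `occB w x`: the number of occurrences of `w` as a substring of `x`
starting at a position divisible by `|w|` (aligned block occurrences). -/
def occB (w x : List Bool) : ℕ :=
  ((List.range (x.length + 1 - w.length)).filter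
    (fun i => decide (i % w.length = 0) && decide ((x.drop i).take w.length = w))).length

/-- `x` is a de Bruijn string of order `n`: it has length `2^n` and every binary
string of length `n` occurs exactly once as a substring of `x ++ x[0..n-2]`. -/
def IsDeBruijn (n : ℕ) (x : List Bool) : Prop :=
  x.length = 2 ^ n ∧ ∀ w : List Bool, w.length = n → occ w (x ++ x.take (n - 1)) = 1

open Classical in
/-- `db n` is the lexicographically least de Bruijn string of order `n`
(using the lexicographic order on `List Bool`, with `false < true`);
`[]` if none exists. -/
noncomputable def db (n : ℕ) : List Bool :=
  if h : ∃ x : List Bool, IsDeBruijn n x ∧ ∀ y, IsDeBruijn n y → x ≤ y then h.choose else []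

/-- The block `B_{n,i} = db_i(n)^t`: `t` copies of the cyclic left shift of `db n` by `i`. -/
noncomputable def Bblk (n t i : ℕ) : List Bool := (List.replicate t ((db n).rotate i)).flatten

/-- The odd part `t` of `n = 2^s * t`. -/
def oddPart (n : ℕ) : ℕ := n / 2 ^ (n.factorization 2)

/-- `Sblk n` is the string `S_n = B_{n,0} B_{n,1} ⋯ B_{n,2^s-1}` where `n = 2^s * t`, `t` odd. -/
noncomputable def Sblk (n : ℕ) : List Bool :=
  ((List.range (2 ^ (n.factorization 2))).map (fun i => Bblk n (oddPart n) i)).flatten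

/-- `Sfin m = S_1 S_2 ⋯ S_m`. -/
noncomputable def Sfin (m : ℕ) : List Bool := ((List.range m).map (fun k => Sblk (k + 1))).flatten

/-- The infinite sequence `S = S_1 S_2 S_3 ⋯`, as a function giving its `i`-th bit. -/
noncomputable def Sseq (i : ℕ) : Bool := (Sfin (i + 1)).getD i false

/-- For odd `n`, `S_n = db(n)^n`. -/
noncomputable def Sodd (n : ℕ) : List Bool := (List.replicate n (db n)).flatten

/-!
Choose a generator `g` of the multiplicative group of `F = 𝔽_{q^n}` and a nonzero linear form
`φ` on `F` over `𝔽_q` vanishing on `1, g, …, g^(n-2)`. The windows of length `n` of the sequence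
`φ (g ^ i)` over a period are the nonzero words, each once, so that one further zero turns a
period into a de Bruijn cycle. Thus de Bruijn strings exist for `q = 2`, and `db n` is one. A
nonempty word `w` with `|w| ≤ n` occurs exactly `2^(n-|w|)` times in the cycle `db n`, while for
`n < |w|` that cycle is shorter than `2^|w|`. In both cases the number of occurrences of `w` in
any rotation of `db n` differs from the expected number by at most `2^|w|`. A prefix of `S`
ending inside `S_{m+1}` consists of at most `(m+1)^2` rotations of strings `db n`, the last of
them possibly incomplete and of length at most `2^(m+1)`, so its discrepancy is `O(2^m)`; but
its length is at least `m * 2^m`.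
-/

theorem count_congr_of_lt {p q : ℕ → Prop} [DecidablePred p] [DecidablePred q] {n : ℕ}
    (h : ∀ i < n, p i ↔ q i) : Nat.count p n = Nat.count q n :=
  le_antisymm (Nat.count_mono_left fun i hi => (h i hi).1)
    (Nat.count_mono_left fun i hi => (h i hi).2)

theorem append_singleton_prefix_iff {α : Type*} {w x : List α} (h : w.length < x.length)
    {a : α} :
    w ++ [a] <+: x ↔ w <+: x ∧ x[w.length] = a := by
  constructor
  · rintro ⟨t, rfl⟩
    simp
  · rintro ⟨⟨t, rfl⟩, ha⟩
    obtain _ | ⟨b, t⟩ := t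
    · simp at h
    · simp_all

theorem take_rotate_map_range {α : Type*} {c : ℕ → α} {N n i : ℕ}
    (hc : ∀ t < n - 1, c (N + t) = c t) (hn : n ≤ N) (hi : i < N) :
    (((List.range N).map c).rotate i).take n = (List.range n).map fun t => c (i + t) := by
  refine List.ext_getElem (by simpa using hn) fun t _ ht => ?_
  simp only [List.length_map, List.length_range] at ht
  simp only [List.getElem_take, List.getElem_rotate, List.getElem_map, List.getElem_range,
    List.length_map, List.length_range]
  obtain h | h := lt_or_ge (t + i) N
  · rw [Nat.mod_eq_of_lt h, add_comm]
  · rw [Nat.mod_eq_sub_mod h, Nat.mod_eq_of_lt (by lia), ← hc _ (by lia)]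
    congr 1
    lia

section Cyclic

variable {α β : Type*} [DecidableEq α] [DecidableEq β]

/-- The number of positions at which `w` occurs in `x` read cyclically: the rotations of `x` by
less than `|x|` that start with `w`. A word longer than `x` does not occur, the reading not wrapping
around twice. -/
def cyclicOcc (w x : List α) : ℕ := Nat.count (fun i => w <+: x.rotate i) x.length

theorem cyclicOcc_rotate (w x : List α) (s : ℕ) : cyclicOcc w (x.rotate s) = cyclicOcc w x := by
  let p : ℕ → Prop := fun i => w <+: x.rotate i
  have hp : (fun i => p (x.length + i)) = p := by
    funext i
    simp only [p, ← List.rotate_rotate, List.rotate_length]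
  have h : Nat.count p s + Nat.count (fun i => p (s + i)) x.length =
      Nat.count p s + Nat.count p x.length := by
    simp_rw [← Nat.count_add, add_comm s, Nat.count_add, hp, add_comm]
  simpa only [cyclicOcc, List.length_rotate, List.rotate_rotate] using Nat.add_left_cancel h

theorem cyclicOcc_map {f : α → β} (hf : Function.Injective f) (w x : List α) :
    cyclicOcc (w.map f) (x.map f) = cyclicOcc w x := by
  simp only [cyclicOcc, ← List.map_rotate, List.length_map, List.prefix_map_iff_of_injective hf]

variable [Fintype α] [Fintype β]

theorem cyclicOcc_eq_sum_append_singleton {w x : List α} (h : w.length < x.length) :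
    cyclicOcc w x = ∑ a, cyclicOcc (w ++ [a]) x := by
  simp_rw [cyclicOcc, Nat.count_eq_card_filter_range, Finset.card_filter]
  rw [Finset.sum_comm]
  refine Finset.sum_congr rfl fun i _ => ?_
  have h' : w.length < (x.rotate i).length := by rwa [List.length_rotate]
  simp [append_singleton_prefix_iff h', ite_and]

/-- A de Bruijn cycle of order `n` over a finite alphabet: every word of length `n` occurs exactly
once cyclically. Over `Bool` and for `n ≠ 0` this is `IsDeBruijn`, with the wrap-around expressed by
rotations instead of the suffix `x.take (n - 1)`. -/
def IsDeBruijnCycle (n : ℕ) (x : List α) : Prop :=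
  x.length = Fintype.card α ^ n ∧ ∀ v : List α, v.length = n → cyclicOcc v x = 1

theorem IsDeBruijnCycle.cyclicOcc_eq [Nontrivial α] {n j : ℕ} {x w : List α}
    (hx : IsDeBruijnCycle n x) (h : w.length + j = n) :
    cyclicOcc w x = Fintype.card α ^ j := by
  induction j generalizing w with
  | zero => exact hx.2 w h
  | succ j ih =>
    have hlt : w.length < x.length := by
      have := Nat.lt_pow_self (n := n) (Fintype.one_lt_card (α := α))
      rw [hx.1]
      lia
    have hext (a : α) : cyclicOcc (w ++ [a]) x = Fintype.card α ^ j :=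
      ih (by rw [List.length_append, List.length_singleton]; lia)
    simp only [cyclicOcc_eq_sum_append_singleton hlt, hext, Finset.sum_const, Finset.card_univ,
      smul_eq_mul, pow_succ']

theorem IsDeBruijnCycle.map (e : α ≃ β) {n : ℕ} {x : List α} (hx : IsDeBruijnCycle n x) :
    IsDeBruijnCycle n (x.map e) := by
  refine ⟨by rw [List.length_map, hx.1, Fintype.card_congr e], fun v hv => ?_⟩
  obtain ⟨u, rfl⟩ := List.map_surjective_iff.2 e.surjective v
  rw [cyclicOcc_map e.injective]
  exact hx.2 u (by rwa [List.length_map] at hv)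

theorem isDeBruijnCycle_of_injOn [Nontrivial α] {n : ℕ} {x : List α}
    (hlen : x.length = Fintype.card α ^ n)
    (hinj : Set.InjOn (fun i => (x.rotate i).take n) (Set.Iio x.length)) :
    IsDeBruijnCycle n x := by
  refine ⟨hlen, fun v hv => ?_⟩
  have hn : n ≤ x.length := hlen ▸ (Nat.lt_pow_self Fintype.one_lt_card).le
  let window (i : Fin x.length) : List.Vector α n :=
    ⟨(x.rotate i).take n, by rw [List.length_take, List.length_rotate, min_eq_left hn]⟩
  have hwindow : Function.Bijective window := by
    refine (Fintype.bijective_iff_injective_and_card _).2 ⟨fun i j hij => ?_, ?_⟩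
    · exact Fin.ext (hinj i.isLt j.isLt (congrArg Subtype.val hij))
    · rw [Fintype.card_fin, card_vector, hlen]
  obtain ⟨i, hi, huniq⟩ := hwindow.existsUnique ⟨v, hv⟩
  have hpre (j : Fin x.length) : v <+: x.rotate j ↔ window j = ⟨v, hv⟩ := by
    rw [List.prefix_iff_eq_take, hv]
    exact ⟨fun h => List.Vector.eq _ _ h.symm, fun h => (congrArg Subtype.val h).symm⟩
  rw [cyclicOcc, Nat.count_eq_card_filter_range, Finset.card_eq_one]
  refine ⟨i, Finset.ext fun j => ?_⟩
  rw [Finset.mem_filter, Finset.mem_range, Finset.mem_singleton]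
  constructor
  · rintro ⟨hj, hvj⟩
    exact congrArg Fin.val (huniq ⟨j, hj⟩ ((hpre ⟨j, hj⟩).1 hvj))
  · rintro rfl
    exact ⟨i.isLt, (hpre i).2 hi⟩

theorem isDeBruijnCycle_map_range [Nontrivial α] {c : ℕ → α} {n : ℕ}
    (hwrap : ∀ t < n - 1, c (Fintype.card α ^ n + t) = c t)
    (hinj : Set.InjOn (fun i (t : Fin n) => c (i + t)) (Set.Iio (Fintype.card α ^ n))) :
    IsDeBruijnCycle n ((List.range (Fintype.card α ^ n)).map c) := by
  have hn : n ≤ Fintype.card α ^ n := (Nat.lt_pow_self Fintype.one_lt_card).le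
  refine isDeBruijnCycle_of_injOn (by simp) fun i hi j hj hij => ?_
  rw [List.length_map, List.length_range] at hi hj
  have hwindow : ∀ t < n, c (i + t) = c (j + t) := by
    simpa [take_rotate_map_range hwrap hn hi, take_rotate_map_range hwrap hn hj] using hij
  exact hinj hi hj (funext fun t => hwindow t t.isLt)

end Cyclic

section FiniteField

variable {K F : Type*} [Field K] [Field F] [Algebra K F]

theorem exists_powerBasis_gen_eq (K : Type*) {F : Type*} [Field K] [Field F] [Algebra K F]
    [Finite F] {g : Fˣ} (hg : ∀ u, u ∈ Subgroup.zpowers g) :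
    ∃ pb : PowerBasis K F, pb.gen = g := by
  have hadjoin : Algebra.adjoin K {(g : F)} = ⊤ := by
    refine Algebra.eq_top_iff.2 fun x => ?_
    obtain rfl | hx := eq_or_ne x 0
    · exact zero_mem _
    · obtain ⟨k, hk⟩ := mem_powers_iff_mem_zpowers.2 (hg (Units.mk0 x hx))
      have hxk : (g : F) ^ k = x := by simpa using congrArg Units.val hk
      exact hxk ▸ pow_mem (Algebra.self_mem_adjoin_singleton K _) k
  exact ⟨.ofAdjoinEqTop (Algebra.IsIntegral.isIntegral _) hadjoin, rfl⟩

theorem exists_linearMap_gen_pow_eq_zero (pb : PowerBasis K F) :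
    ∃ φ : F →ₗ[K] K, φ ≠ 0 ∧ ∀ t < pb.dim - 1, φ (pb.gen ^ t) = 0 := by
  have hdim : 0 < pb.dim := pb.dim_pos
  let last : Fin pb.dim := ⟨pb.dim - 1, by lia⟩
  have hcoord (t : Fin pb.dim) :
      pb.basis.coord last (pb.gen ^ (t : ℕ)) = if t = last then 1 else 0 := by
    rw [← pb.basis_eq_pow, Module.Basis.coord_apply, pb.basis.repr_self_apply]
  refine ⟨pb.basis.coord last, fun h => ?_, fun t ht => ?_⟩
  · simpa [h] using hcoord last
  · rw [hcoord ⟨t, by lia⟩, if_neg (by simp [last, Fin.ext_iff]; lia)]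

theorem eq_zero_of_forall_apply_mul_gen_pow (pb : PowerBasis K F) {φ : F →ₗ[K] K} (hφ : φ ≠ 0)
    {x : F} (hx : ∀ t < pb.dim, φ (x * pb.gen ^ t) = 0) : x = 0 := by
  by_contra hne
  have hzero : φ ∘ₗ LinearMap.mulLeft K x = 0 :=
    pb.basis.ext fun t => by simpa using hx t t.isLt
  refine hφ (LinearMap.ext fun y => ?_)
  simpa [mul_inv_cancel_left₀ hne] using LinearMap.congr_fun hzero (x⁻¹ * y)

variable (K F) in
theorem exists_maximalLengthSequence [Finite F] :
    ∃ b : ℕ → K, Function.Periodic b (Nat.card F - 1) ∧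
      (∀ t < Module.finrank K F - 1, b t = 0) ∧
      (∀ i, ∃ t < Module.finrank K F, b (i + t) ≠ 0) ∧
      Set.InjOn (fun i (t : Fin (Module.finrank K F)) => b (i + t)) (Set.Iio (Nat.card F - 1)) := by
  obtain ⟨g, hg⟩ := IsCyclic.exists_generator (α := Fˣ)
  have hord : orderOf g = Nat.card F - 1 := by
    rw [orderOf_eq_card_of_forall_mem_zpowers hg, Nat.card_units]
  obtain ⟨pb, hgen⟩ := exists_powerBasis_gen_eq K hg
  obtain ⟨φ, hφ, hφpow⟩ := exists_linearMap_gen_pow_eq_zero pb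
  rw [pb.finrank]
  refine ⟨fun i => φ (pb.gen ^ i), fun i => ?_, hφpow, fun i => ?_, fun i hi j hj h => ?_⟩
  · have hperiod : (g : F) ^ (Nat.card F - 1) = 1 := by
      rw [← hord, ← Units.val_pow_eq_pow_val, pow_orderOf_eq_one, Units.val_one]
    simp only [hgen, pow_add, hperiod, mul_one]
  · by_contra! h
    have hzero : pb.gen ^ i = 0 :=
      eq_zero_of_forall_apply_mul_gen_pow pb hφ fun t ht => by rw [← pow_add, h t ht]
    exact pow_ne_zero i g.ne_zero (hgen ▸ hzero)
  · have hsub : pb.gen ^ i - pb.gen ^ j = 0 :=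
      eq_zero_of_forall_apply_mul_gen_pow pb hφ fun t ht => by
        rw [sub_mul, ← pow_add, ← pow_add, map_sub, sub_eq_zero]
        exact congrFun h ⟨t, ht⟩
    refine pow_injOn_Iio_orderOf (hord ▸ hi) (hord ▸ hj) (Units.ext ?_)
    simpa [hgen] using sub_eq_zero.1 hsub

end FiniteField

theorem exists_isDeBruijnCycle (K : Type*) [Field K] [Fintype K] [DecidableEq K] {n : ℕ}
    (hn : n ≠ 0) : ∃ x : List K, IsDeBruijnCycle n x := by
  have : NeZero n := ⟨hn⟩
  obtain ⟨p, _⟩ := CharP.exists K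
  have : Fact p.Prime := ⟨CharP.char_is_prime K p⟩
  obtain ⟨b, hper, hzero, hne, hinj⟩ :=
    exists_maximalLengthSequence K (FiniteField.Extension K p n)
  rw [FiniteField.natCard_extension, Nat.card_eq_fintype_card] at hper hinj
  rw [FiniteField.finrank_extension] at hzero hne hinj
  obtain ⟨M, hM⟩ : ∃ M, Fintype.card K ^ n = M + 1 :=
    Nat.exists_eq_succ_of_ne_zero (pow_ne_zero n Fintype.card_ne_zero)
  -- One extra zero in front of a period of `b` lengthens its run of `n - 1` zeros to `n` and
  -- leaves all its windows as they were.
  let c : ℕ → K := fun i => i.casesOn 0 b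
  have hc0 : ∀ t < n, c t = 0
    | 0, _ => rfl
    | t + 1, ht => hzero t (by lia)
  have hwrap : ∀ t < n - 1, c (Fintype.card K ^ n + t) = c t := fun t ht => calc
    c (Fintype.card K ^ n + t) = b (t + (Fintype.card K ^ n - 1)) := by
      rw [hM, Nat.add_sub_cancel, add_comm t, Nat.add_right_comm]
    _ = c t := by rw [hper t, hzero t ht, hc0 t (by lia)]
  refine ⟨_, isDeBruijnCycle_map_range hwrap fun i hi j hj hij => ?_⟩
  have hwindow : ∀ t < n, c (i + t) = c (j + t) := fun t ht => congrFun hij ⟨t, ht⟩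
  have hsucc (i t : ℕ) : c (i + 1 + t) = b (i + t) := by rw [Nat.add_right_comm]
  match i, j with
  | 0, 0 => rfl
  | 0, j + 1 =>
    obtain ⟨t, ht, hbt⟩ := hne j
    exact absurd (by rw [← hsucc, ← hwindow t ht, zero_add, hc0 t ht]) hbt
  | i + 1, 0 =>
    obtain ⟨t, ht, hbt⟩ := hne i
    exact absurd (by rw [← hsucc, hwindow t ht, zero_add, hc0 t ht]) hbt
  | i + 1, j + 1 =>
    refine congrArg (· + 1) (hinj (Nat.lt_sub_of_add_lt hi) (Nat.lt_sub_of_add_lt hj) ?_)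
    exact funext fun t => by simpa only [hsucc] using hwindow t t.isLt

section Occurrences

variable {w : List Bool}

theorem occ_eq_count (hw : w ≠ []) (x : List Bool) :
    occ w x = Nat.count (fun i => w <+: x.drop i) x.length := by
  have hpos : 0 < w.length := List.length_pos_iff.2 hw
  have htail : Nat.count (fun i => w <+: x.drop (x.length + 1 - w.length + i))
      (x.length - (x.length + 1 - w.length)) = 0 :=
    Nat.count_of_forall_not fun i _ h => by
      have := h.length_le
      rw [List.length_drop] at this
      lia
  have hsplit : x.length = x.length + 1 - w.length + (x.length - (x.length + 1 - w.length)) := by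
    lia
  conv_rhs => rw [hsplit]
  rw [Nat.count_add, htail, occ, ← List.countP_eq_length_filter, Nat.count, add_zero]
  simp only [List.prefix_iff_eq_take, eq_comm]

theorem occ_le_length (hw : w ≠ []) (x : List Bool) : occ w x ≤ x.length :=
  occ_eq_count hw x ▸ Nat.count_le _

theorem occ_eq_zero_of_length_lt {x : List Bool} (h : x.length < w.length) : occ w x = 0 := by
  simp [occ, Nat.sub_eq_zero_of_le (Nat.succ_le_of_lt h)]

theorem occ_le_count_drop_append (hw : w ≠ []) (x : List Bool) (y : ℕ → List Bool) :
    occ w x ≤ Nat.count (fun i => w <+: x.drop i ++ y i) x.length := by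
  rw [occ_eq_count hw]
  exact Nat.count_mono_left fun i _ h => h.trans (List.prefix_append _ _)

theorem count_drop_append_le (hw : w ≠ []) (x : List Bool) (y : ℕ → List Bool) :
    Nat.count (fun i => w <+: x.drop i ++ y i) x.length ≤ occ w x + w.length := by
  have hinside : Nat.count (fun i => w <+: x.drop i ++ y i) (x.length - w.length) ≤ occ w x := by
    rw [occ_eq_count hw]
    refine (Nat.count_mono_left fun i hi h => ?_).trans (Nat.count_monotone _ (Nat.sub_le _ _))
    exact List.prefix_of_prefix_length_le h (List.prefix_append _ _) (by simp; lia)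
  have hsplit : x.length = x.length - w.length + (x.length - (x.length - w.length)) := by lia
  conv_lhs => rw [hsplit]
  rw [Nat.count_add]
  exact add_le_add hinside ((Nat.count_le _).trans (by lia))

theorem occ_append_eq (hw : w ≠ []) (x y : List Bool) :
    occ w (x ++ y) = Nat.count (fun i => w <+: x.drop i ++ y) x.length + occ w y := by
  rw [occ_eq_count hw, occ_eq_count hw, List.length_append, Nat.count_add]
  simp only [← List.drop_drop, List.drop_left]
  congr 1
  exact count_congr_of_lt fun i hi => by rw [List.drop_append_of_le_length hi.le]

theorem occ_add_occ_le (hw : w ≠ []) (x y : List Bool) :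
    occ w x + occ w y ≤ occ w (x ++ y) := by
  rw [occ_append_eq hw]
  exact Nat.add_le_add_right (occ_le_count_drop_append hw x fun _ => y) _

theorem occ_append_le (hw : w ≠ []) (x y : List Bool) :
    occ w (x ++ y) ≤ occ w x + occ w y + w.length := by
  rw [occ_append_eq hw, Nat.add_right_comm]
  exact Nat.add_le_add_right (count_drop_append_le hw x fun _ => y) _

theorem cyclicOcc_eq_count (w x : List Bool) :
    cyclicOcc w x = Nat.count (fun i => w <+: x.drop i ++ x.take i) x.length :=
  count_congr_of_lt fun i hi => by rw [List.rotate_eq_drop_append_take hi.le]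

theorem occ_append_take_eq_cyclicOcc {x : List Bool} (hw : w ≠ []) (h : w.length ≤ x.length) :
    occ w (x ++ x.take (w.length - 1)) = cyclicOcc w x := by
  have hpos : 0 < w.length := List.length_pos_iff.2 hw
  rw [occ_append_eq hw, occ_eq_zero_of_length_lt (by rw [List.length_take]; lia), add_zero,
    cyclicOcc_eq_count]
  refine count_congr_of_lt fun i hi => ?_
  simp only [List.prefix_iff_eq_take, List.take_append, List.take_take, List.length_drop]
  rw [min_eq_left (by lia), min_eq_left (by lia)]

theorem isDeBruijn_iff_isDeBruijnCycle {n : ℕ} (hn : n ≠ 0) {x : List Bool} :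
    IsDeBruijn n x ↔ IsDeBruijnCycle n x := by
  refine and_congr_right fun hx => forall₂_congr fun v hv => ?_
  have hv0 : v ≠ [] := List.ne_nil_of_length_pos (by lia)
  have hle : v.length ≤ x.length := by
    rw [hx, hv]
    exact Nat.lt_two_pow_self.le
  rw [← hv, occ_append_take_eq_cyclicOcc hv0 hle]

theorem exists_isDeBruijn {n : ℕ} (hn : n ≠ 0) : ∃ x, IsDeBruijn n x := by
  have : Fact (Nat.Prime 2) := ⟨Nat.prime_two⟩
  obtain ⟨x, hx⟩ := exists_isDeBruijnCycle (ZMod 2) hn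
  exact ⟨x.map finTwoEquiv, (isDeBruijn_iff_isDeBruijnCycle hn).2 (hx.map finTwoEquiv)⟩

theorem isDeBruijn_db {n : ℕ} (hn : n ≠ 0) : IsDeBruijn n (db n) := by
  have hfinite : {x | IsDeBruijn n x}.Finite :=
    (List.finite_length_eq Bool (2 ^ n)).subset fun x hx => hx.1
  obtain ⟨x, hx, hmin⟩ := Set.exists_min_image _ id hfinite (exists_isDeBruijn hn)
  have hex : ∃ x, IsDeBruijn n x ∧ ∀ y, IsDeBruijn n y → x ≤ y := ⟨x, hx, hmin⟩
  rw [db, dif_pos hex]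
  exact hex.choose_spec.1

end Occurrences

section Discrepancy

variable {w : List Bool}

/-- The distance between the number of occurrences of `w` in `x` and the number `|x| / 2^|w|`
expected in a random string. -/
noncomputable def discrepancy (w x : List Bool) : ℝ := |(occ w x : ℝ) - x.length / 2 ^ w.length|

theorem discrepancy_nonneg (w x : List Bool) : 0 ≤ discrepancy w x := abs_nonneg _

theorem discrepancy_append_le (hw : w ≠ []) (x y : List Bool) :
    discrepancy w (x ++ y) ≤ discrepancy w x + discrepancy w y + w.length := by
  have hlower : (occ w x + occ w y : ℝ) ≤ occ w (x ++ y) := mod_cast occ_add_occ_le hw x y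
  have hupper : (occ w (x ++ y) : ℝ) ≤ occ w x + occ w y + w.length :=
    mod_cast occ_append_le hw x y
  have hdefect : |(occ w (x ++ y) - occ w x - occ w y : ℝ)| ≤ w.length :=
    abs_le.2 ⟨by linarith [(Nat.cast_nonneg w.length : (0 : ℝ) ≤ w.length)], by linarith⟩
  calc discrepancy w (x ++ y)
      = |((occ w x : ℝ) - x.length / 2 ^ w.length) + (occ w y - y.length / 2 ^ w.length) +
          (occ w (x ++ y) - occ w x - occ w y)| := by
        rw [discrepancy, List.length_append]
        push_cast
        ring_nf
    _ ≤ discrepancy w x + discrepancy w y + w.length :=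
        (abs_add_three _ _ _).trans (add_le_add_right hdefect _)

theorem discrepancy_le_length (hw : w ≠ []) (x : List Bool) : discrepancy w x ≤ x.length := by
  have hocc : (occ w x : ℝ) ≤ x.length := mod_cast occ_le_length hw x
  have hdiv : (x.length : ℝ) / 2 ^ w.length ≤ x.length :=
    div_le_self (Nat.cast_nonneg _) (one_le_pow₀ one_le_two)
  exact abs_sub_le_of_nonneg_of_le (Nat.cast_nonneg _) hocc (by positivity) hdiv

theorem discrepancy_rotate_le {n : ℕ} {x : List Bool} (hw : w ≠ []) (hx : IsDeBruijn n x) (s : ℕ) :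
    discrepancy w (x.rotate s) ≤ 2 ^ w.length := by
  obtain hn | hn := lt_or_ge n w.length
  · refine (discrepancy_le_length hw _).trans ?_
    rw [List.length_rotate, hx.1]
    exact_mod_cast Nat.pow_le_pow_right two_pos hn.le
  have hn0 : n ≠ 0 := ((List.length_pos_iff.2 hw).trans_le hn).ne'
  have hcyc : cyclicOcc w (x.rotate s) = 2 ^ (n - w.length) := by
    rw [cyclicOcc_rotate, ((isDeBruijn_iff_isDeBruijnCycle hn0).1 hx).cyclicOcc_eq
      (Nat.add_sub_of_le hn), Fintype.card_bool]
  have hlower : occ w (x.rotate s) ≤ cyclicOcc w (x.rotate s) :=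
    cyclicOcc_eq_count w _ ▸ occ_le_count_drop_append hw _ _
  have hupper : cyclicOcc w (x.rotate s) ≤ occ w (x.rotate s) + w.length :=
    cyclicOcc_eq_count w _ ▸ count_drop_append_le hw _ _
  have hmean : ((x.rotate s).length : ℝ) / 2 ^ w.length = cyclicOcc w (x.rotate s) := by
    rw [hcyc, List.length_rotate, hx.1, Nat.cast_pow, Nat.cast_pow, Nat.cast_ofNat,
      pow_sub₀ _ two_ne_zero hn, div_eq_mul_inv]
  have hlower' : (occ w (x.rotate s) : ℝ) ≤ cyclicOcc w (x.rotate s) := mod_cast hlower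
  have hupper' : (cyclicOcc w (x.rotate s) : ℝ) ≤ occ w (x.rotate s) + w.length := mod_cast hupper
  calc discrepancy w (x.rotate s) ≤ w.length := by
        rw [discrepancy, hmean, abs_of_nonpos] <;> linarith
    _ ≤ 2 ^ w.length := mod_cast Nat.lt_two_pow_self.le

theorem discrepancy_take_flatten_le (hw : w ≠ []) {C : ℝ} {L : ℕ} {ls : List (List Bool)}
    (hC : ∀ x ∈ ls, discrepancy w x ≤ C) (hL : ∀ x ∈ ls, x.length ≤ L) (m : ℕ) :
    discrepancy w (ls.flatten.take m) ≤ ls.length * (C + w.length) + L := by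
  induction ls generalizing m with
  | nil => simpa using (discrepancy_le_length hw []).trans (by simp)
  | cons a l ih =>
    rw [List.forall_mem_cons] at hC hL
    have hC0 : 0 ≤ C := (discrepancy_nonneg w a).trans hC.1
    rw [List.flatten_cons, List.length_cons, Nat.cast_succ]
    obtain hm | hm := le_total m a.length
    · have htake : ((a.take m).length : ℝ) ≤ L := mod_cast (List.length_take_le' m a).trans hL.1
      rw [List.take_append_of_le_length hm]
      calc discrepancy w (a.take m) ≤ L := (discrepancy_le_length hw _).trans htake
        _ ≤ (l.length + 1) * (C + w.length) + L := le_add_of_nonneg_left (by positivity)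
    · rw [List.take_append, List.take_of_length_le hm]
      calc discrepancy w (a ++ l.flatten.take (m - a.length))
          ≤ discrepancy w a + discrepancy w (l.flatten.take (m - a.length)) + w.length :=
            discrepancy_append_le hw _ _
        _ ≤ C + (l.length * (C + w.length) + L) + w.length := by
            gcongr
            exacts [hC.1, ih hC.2 hL.2 _]
        _ = (l.length + 1) * (C + w.length) + L := by ring

theorem tendsto_occ_div_iff_tendsto_discrepancy_div {x : ℕ → List Bool}
    (hx : ∀ m, (x m).length = m) :
    Filter.Tendsto (fun m => (occ w (x m) : ℝ) / m) Filter.atTop (nhds (2 ^ w.length : ℝ)⁻¹) ↔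
      Filter.Tendsto (fun m => discrepancy w (x m) / m) Filter.atTop (nhds 0) := by
  rw [tendsto_iff_norm_sub_tendsto_zero]
  refine Filter.tendsto_congr' ?_
  filter_upwards [Filter.eventually_ne_atTop 0] with m hm
  have hm' : (m : ℝ) ≠ 0 := Nat.cast_ne_zero.2 hm
  rw [discrepancy, hx, Real.norm_eq_abs, ← Nat.abs_cast m, ← abs_div, Nat.abs_cast, sub_div,
    div_right_comm, div_self hm', one_div]

end Discrepancy

section Prefixes

/-- The factors `db_i(n)` of `S_n` in their order of appearance, each `B_{n,i}` contributing
`oddPart n` of them. -/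
noncomputable def shifts (n : ℕ) : List (List Bool) :=
  (List.range (2 ^ n.factorization 2)).flatMap fun i =>
    List.replicate (oddPart n) ((db n).rotate i)

/-- The factors `db_i(n)` of `S_1 S_2 ⋯ S_m` in their order of appearance. -/
noncomputable def shiftsUpTo (m : ℕ) : List (List Bool) :=
  (List.range m).flatMap fun k => shifts (k + 1)

theorem flatten_shifts (n : ℕ) : (shifts n).flatten = Sblk n := by
  simp only [shifts, Sblk, Bblk, List.flatMap, List.flatten_flatten, List.map_map,
    Function.comp_def]

theorem flatten_shiftsUpTo (m : ℕ) : (shiftsUpTo m).flatten = Sfin m := by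
  simp only [shiftsUpTo, Sfin, List.flatMap, List.flatten_flatten, List.map_map,
    Function.comp_def, flatten_shifts]

theorem length_shifts (n : ℕ) : (shifts n).length = n := by
  simpa [shifts, oddPart] using Nat.ordProj_mul_ordCompl_eq_self n 2

theorem length_shiftsUpTo_le (m : ℕ) : (shiftsUpTo m).length ≤ m ^ 2 := by
  induction m with
  | zero => simp [shiftsUpTo]
  | succ m ih =>
    have hsucc : (shiftsUpTo (m + 1)).length = (shiftsUpTo m).length + (m + 1) := by
      simp [shiftsUpTo, List.range_succ, length_shifts]
    nlinarith

theorem exists_eq_rotate_db_of_mem_shifts {n : ℕ} {x : List Bool} (hx : x ∈ shifts n) :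
    ∃ i, x = (db n).rotate i := by
  simp only [shifts, List.mem_flatMap, List.mem_replicate] at hx
  obtain ⟨i, -, -, rfl⟩ := hx
  exact ⟨i, rfl⟩

theorem exists_eq_rotate_db_of_mem_shiftsUpTo {m : ℕ} {x : List Bool} (hx : x ∈ shiftsUpTo m) :
    ∃ n ≤ m, n ≠ 0 ∧ ∃ i, x = (db n).rotate i := by
  obtain ⟨k, hk, hxk⟩ := List.mem_flatMap.1 hx
  exact ⟨k + 1, List.mem_range.1 hk, k.succ_ne_zero, exists_eq_rotate_db_of_mem_shifts hxk⟩

theorem length_Sblk {n : ℕ} (hn : n ≠ 0) : (Sblk n).length = n * 2 ^ n := by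
  have hlen : ∀ k ∈ (shifts n).map List.length, k = 2 ^ n := by
    refine List.forall_mem_map.2 fun x hx => ?_
    obtain ⟨i, rfl⟩ := exists_eq_rotate_db_of_mem_shifts hx
    rw [List.length_rotate, (isDeBruijn_db hn).1]
  rw [← flatten_shifts, List.length_flatten, List.sum_eq_card_nsmul _ _ hlen, List.length_map,
    length_shifts, smul_eq_mul]

theorem Sfin_succ (m : ℕ) : Sfin (m + 1) = Sfin m ++ Sblk (m + 1) := by
  simp [Sfin, List.range_succ]

theorem length_Sfin_succ (m : ℕ) :
    (Sfin (m + 1)).length = (Sfin m).length + (m + 1) * 2 ^ (m + 1) := by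
  rw [Sfin_succ, List.length_append, length_Sblk m.succ_ne_zero]

theorem strictMono_length_Sfin : StrictMono fun m => (Sfin m).length :=
  strictMono_nat_of_lt_succ fun m => by
    rw [length_Sfin_succ]
    exact Nat.lt_add_of_pos_right (by positivity)

theorem mul_two_pow_le_length_Sfin (m : ℕ) : m * 2 ^ m ≤ (Sfin m).length := by
  cases m with
  | zero => simp
  | succ m => exact length_Sfin_succ m ▸ Nat.le_add_left _ _

theorem Sfin_prefix_Sfin {a b : ℕ} (h : a ≤ b) : Sfin a <+: Sfin b := by
  induction h with
  | refl => exact List.prefix_rfl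
  | step _ ih => exact ih.trans (Sfin_succ _ ▸ List.prefix_append _ _)

theorem Sseq_eq_getElem {m i : ℕ} (h : i < (Sfin m).length) : Sseq i = (Sfin m)[i] := by
  have hi : i < (Sfin (i + 1)).length := strictMono_length_Sfin.le_apply (x := i + 1)
  rw [Sseq, List.getD_eq_getElem _ _ hi]
  obtain him | him := le_total (i + 1) m
  · exact (Sfin_prefix_Sfin him).getElem hi
  · exact ((Sfin_prefix_Sfin him).getElem h).symm

theorem map_Sseq_range {m M : ℕ} (h : M ≤ (Sfin m).length) :
    (List.range M).map Sseq = (Sfin m).take M := by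
  refine List.ext_getElem (by simpa using h) fun i hi _ => ?_
  rw [List.length_map, List.length_range] at hi
  rw [List.getElem_map, List.getElem_range, List.getElem_take, Sseq_eq_getElem (hi.trans_le h)]

variable {w : List Bool}

theorem discrepancy_map_Sseq_range_le (hw : w ≠ []) {m M : ℕ} (h : M ≤ (Sfin m).length) :
    discrepancy w ((List.range M).map Sseq) ≤ m ^ 2 * (2 ^ w.length + w.length) + 2 ^ m := by
  have hdisc : ∀ x ∈ shiftsUpTo m, discrepancy w x ≤ 2 ^ w.length := fun x hx => by
    obtain ⟨n, -, hn, i, rfl⟩ := exists_eq_rotate_db_of_mem_shiftsUpTo hx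
    exact discrepancy_rotate_le hw (isDeBruijn_db hn) i
  have hlen : ∀ x ∈ shiftsUpTo m, x.length ≤ 2 ^ m := fun x hx => by
    obtain ⟨n, hnm, hn, i, rfl⟩ := exists_eq_rotate_db_of_mem_shiftsUpTo hx
    rw [List.length_rotate, (isDeBruijn_db hn).1]
    exact Nat.pow_le_pow_right two_pos hnm
  have hcount : ((shiftsUpTo m).length : ℝ) ≤ m ^ 2 := mod_cast length_shiftsUpTo_le m
  rw [map_Sseq_range h, ← flatten_shiftsUpTo]
  calc discrepancy w ((shiftsUpTo m).flatten.take M)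
      ≤ (shiftsUpTo m).length * (2 ^ w.length + w.length) + (2 ^ m : ℕ) :=
        discrepancy_take_flatten_le hw hdisc hlen M
    _ ≤ m ^ 2 * (2 ^ w.length + w.length) + 2 ^ m := by
        push_cast
        gcongr

theorem succ_sq_le_four_mul_two_pow : ∀ n : ℕ, (n + 1) ^ 2 ≤ 4 * 2 ^ n
  | 0 | 1 | 2 => by norm_num
  | n + 3 => calc
      (n + 3 + 1) ^ 2 ≤ (n + 2 + 1) ^ 2 * 2 := by lia
      _ ≤ 4 * 2 ^ (n + 2) * 2 := Nat.mul_le_mul_right 2 (succ_sq_le_four_mul_two_pow (n + 2))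
      _ = 4 * 2 ^ (n + 3) := by rw [pow_succ 2 (n + 2), mul_assoc]

theorem discrepancy_map_Sseq_range_div_le (hw : w ≠ []) {m M : ℕ} (hm : 0 < m)
    (hlower : (Sfin m).length < M) (hupper : M ≤ (Sfin (m + 1)).length) :
    discrepancy w ((List.range M).map Sseq) / M ≤ (4 * (2 ^ w.length + w.length) + 2) / m := by
  have hM : (m * 2 ^ m : ℝ) ≤ M := mod_cast (mul_two_pow_le_length_Sfin m).trans hlower.le
  have hsq : ((m + 1 : ℕ) : ℝ) ^ 2 ≤ 4 * 2 ^ m := mod_cast succ_sq_le_four_mul_two_pow m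
  calc discrepancy w ((List.range M).map Sseq) / M
      ≤ ((m + 1 : ℕ) ^ 2 * (2 ^ w.length + w.length) + 2 ^ (m + 1)) / M := by
        gcongr
        exact discrepancy_map_Sseq_range_le hw hupper
    _ ≤ (4 * 2 ^ m * (2 ^ w.length + w.length) + 2 ^ (m + 1)) / (m * 2 ^ m) := by gcongr
    _ = (4 * (2 ^ w.length + w.length) + 2) / m := by
      field_simp
      ring

theorem tendsto_discrepancy_map_Sseq_range_div (hw : w ≠ []) :
    Filter.Tendsto (fun M : ℕ => discrepancy w ((List.range M).map Sseq) / M)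
      Filter.atTop (nhds 0) := by
  have hexists (M : ℕ) (hM : 0 < M) : ∃ m, (Sfin m).length < M ∧ M ≤ (Sfin (m + 1)).length :=
    strictMono_length_Sfin.exists_between_of_tendsto_atTop strictMono_length_Sfin.tendsto_atTop hM
  choose! stage hlower hupper using hexists
  have hstage : Filter.Tendsto stage Filter.atTop Filter.atTop := by
    refine Filter.tendsto_atTop.2 fun b => ?_
    filter_upwards [Filter.eventually_gt_atTop (Sfin b).length] with M hM
    have hlt : (Sfin b).length < (Sfin (stage M + 1)).length :=
      hM.trans_le (hupper M (Nat.zero_lt_of_lt hM))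
    exact Nat.le_of_lt_succ (strictMono_length_Sfin.lt_iff_lt.1 hlt)
  have hbound : Filter.Tendsto
      (fun M => (4 * (2 ^ w.length + w.length) + 2 : ℝ) / stage M) Filter.atTop (nhds 0) :=
    (tendsto_const_div_atTop_nhds_zero_nat _).comp hstage
  refine squeeze_zero' (.of_forall fun M => ?_) ?_ hbound
  · exact div_nonneg (discrepancy_nonneg _ _) M.cast_nonneg
  · filter_upwards [Filter.eventually_gt_atTop 0, hstage.eventually_gt_atTop 0] with M hM hpos
    exact discrepancy_map_Sseq_range_div_le hw hpos (hlower M hM) (hupper M hM)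

end Prefixes

/-- The sequence `S = S_1 S_2 S_3 ⋯` is normal: for every nonempty `w`,
`occ(w, S↾m)/m → 2^{-|w|}`. -/
theorem stmt14 (w : List Bool) (hw : w ≠ []) :
    Filter.Tendsto (fun m : ℕ => (occ w ((List.range m).map Sseq) : ℝ) / m)
      Filter.atTop (nhds ((2 ^ w.length : ℝ)⁻¹)) :=
  (tendsto_occ_div_iff_tendsto_discrepancy_div (by simp)).2
    (tendsto_discrepancy_map_Sseq_range_div hw)
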